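/- Let d ∈ {3, 4, 5, …}, ν ∈ ℂ \ (−ℕ₀) with −ν/2 ∉ −ℕ₀ as needed for the right-hand side, x ∈ [−1, 1], and ρ ∈ ℝ with 0 < ρ < 1. Then ( ρ^{(d−1)/2} (1−ρ²)^{ν−(d−1)/2} ) / (1 + ρ² − 2ρx)^ν = ( e^{−iπ(ν−(d−1)/2)} Γ((d−2)/2) ) / ( 2√π Γ(ν) ) · Σ_{n=0}^∞ (2n + d − 2) Q_{n+(d−3)/2}^{ν−(d−1)/2}((1+ρ²)/(2ρ)) C_n^{d/2−1}(x). -/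

import Mathlib

open Complex

/-- Pochhammer symbol (rising factorial) `(a)_k = a (a+1) ⋯ (a+k-1)`. -/
noncomputable def poch (a : ℂ) (k : ℕ) : ℂ := ∏ i ∈ Finset.range k, (a + (i : ℂ))

/-- Gauss hypergeometric function `₂F₁(a,b;c;w)` as a series. -/
noncomputable def hyp2F1 (a b c w : ℂ) : ℂ :=
  ∑' k : ℕ, poch a k * poch b k / (poch c k * (Nat.factorial k : ℂ)) * w ^ k

/-- Terminating generalized hypergeometric function `₃F₂(-m,a₂,a₃;b₁,b₂;1)`. -/
noncomputable def hyp3F2 (m : ℕ) (a2 a3 b1 b2 : ℂ) : ℂ :=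
  ∑ j ∈ Finset.range (m + 1),
    poch (-(m : ℂ)) j * poch a2 j * poch a3 j /
      (poch b1 j * poch b2 j * (Nat.factorial j : ℂ))

/-- Gegenbauer polynomial `C_n^μ(x)`. -/
noncomputable def gegenbauerC (n : ℕ) (μ : ℂ) (x : ℂ) : ℂ :=
  poch (2 * μ) n / (Nat.factorial n : ℂ) *
    ∑ j ∈ Finset.range (n + 1),
      poch (-(n : ℂ)) j * poch ((n : ℂ) + 2 * μ) j /
          (poch (μ + 1 / 2) j * (Nat.factorial j : ℂ)) * ((1 - x) / 2) ^ j

/-- Associated Legendre function of the second kind `Q_ν^μ(z)` (principal branches). -/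
noncomputable def legendreQ (ν μ z : ℂ) : ℂ :=
  (Real.sqrt Real.pi : ℂ) * Complex.exp (Real.pi * I * μ) * Complex.Gamma (ν + μ + 1) *
      (z ^ 2 - 1) ^ (μ / 2) /
      ((2 : ℂ) ^ (ν + 1) * Complex.Gamma (ν + 3 / 2) * z ^ (ν + μ + 1)) *
    hyp2F1 ((ν + μ + 2) / 2) ((ν + μ + 1) / 2) (ν + 3 / 2) (1 / z ^ 2)

/-- Legendre polynomial `P_n(x)`. -/
noncomputable def legendrePoly (n : ℕ) (x : ℂ) : ℂ :=
  ∑ j ∈ Finset.range (n + 1),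
    poch (-(n : ℂ)) j * poch ((n : ℂ) + 1) j / (poch 1 j * (Nat.factorial j : ℂ)) *
      ((1 - x) / 2) ^ j

/-- Chebyshev polynomial of the second kind `U_n(x)`. -/
noncomputable def chebyshevU (n : ℕ) (x : ℂ) : ℂ :=
  ((n : ℂ) + 1) *
    ∑ j ∈ Finset.range (n + 1),
      poch (-(n : ℂ)) j * poch ((n : ℂ) + 2) j / (poch (3 / 2) j * (Nat.factorial j : ℂ)) *
        ((1 - x) / 2) ^ j


lemma poch_zero (a : ℂ) : poch a 0 = 1 := by simp [poch]
lemma poch_succ (a : ℂ) (k : ℕ) : poch a (k+1) = poch a k * (a + k) := by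
  simp [poch, Finset.prod_range_succ]
lemma poch_succ' (a : ℂ) (k : ℕ) : poch a (k+1) = a * poch (a+1) k := by
  simp only [poch, Finset.prod_range_succ']
  rw [mul_comm]
  congr 1
  · simp
  · apply Finset.prod_congr rfl; intros; push_cast; ring
lemma poch_add (a : ℂ) (m k : ℕ) : poch a (m+k) = poch a m * poch (a+m) k := by
  induction k with
  | zero => simp [poch_zero]
  | succ k ih => rw [← add_assoc, poch_succ, ih, poch_succ]; push_cast; ring
lemma poch_ne_zero (a : ℂ) (h : 0 < a.re) (k : ℕ) : poch a k ≠ 0 := by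
  rw [poch, Finset.prod_ne_zero_iff]
  intro i _ h0
  have := congrArg Complex.re h0
  simp at this
  have : (0:ℝ) ≤ i := Nat.cast_nonneg i
  linarith
lemma poch_neg_nat (n j : ℕ) (h : n < j) : poch (-(n:ℂ)) j = 0 := by
  rw [poch, Finset.prod_eq_zero_iff]
  exact ⟨n, by simpa using h, by simp⟩

lemma poch_double (a : ℂ) (k : ℕ) :
    poch ((a+1)/2) k * poch (a/2) k = poch a (2*k) / 4^k := by
  induction k with
  | zero => simp [poch_zero]
  | succ k ih =>
    rw [show 2*(k+1) = 2*k+1+1 by ring, poch_succ, poch_succ, poch_succ, poch_succ]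
    rw [show poch ((a+1)/2) k * ((a+1)/2 + k) * (poch (a/2) k * (a/2+k)) =
      (poch ((a+1)/2) k * poch (a/2) k) * (((a+1)/2 + k) * (a/2+k)) by ring, ih]
    push_cast; field_simp; ring

noncomputable def gco (μ : ℂ) (n j : ℕ) : ℂ :=
  poch (-(n:ℂ)) j / (n.factorial : ℂ) * poch (2*μ) (n+j) / (poch (μ+1/2) j * (j.factorial : ℂ))

lemma gegen_eq (μ x : ℂ) (n M : ℕ) (h : n < M) :
    gegenbauerC n μ x = ∑ j ∈ Finset.range M, gco μ n j * ((1-x)/2)^j := by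
  have : ∑ j ∈ Finset.range M, gco μ n j * ((1-x)/2)^j
      = ∑ j ∈ Finset.range (n+1), gco μ n j * ((1-x)/2)^j := by
    symm
    apply Finset.sum_subset
    · intro i; simp; omega
    · intro i _ hi
      have : n < i := by simp at hi; omega
      simp [gco, poch_neg_nat n i this]
  rw [this, gegenbauerC, Finset.mul_sum]
  apply Finset.sum_congr rfl
  intro j _
  rw [gco, poch_add, add_comm (n:ℂ)]
  ring

lemma fac_ne (n : ℕ) : (n.factorial : ℂ) ≠ 0 := by exact_mod_cast n.factorial_ne_zero

lemma gco_rec (μ : ℂ) (hμ : 0 < μ.re) (n j : ℕ) :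
    ((n:ℂ)+2) * gco μ (n+2) (j+1) = 2*(n+1+μ)*(gco μ (n+1) (j+1) - 2 * gco μ (n+1) j)
      - (n+2*μ) * gco μ n (j+1) := by
  have hs : poch (μ+1/2) j ≠ 0 := poch_ne_zero _ (by simp; linarith) _
  have hs' : μ+1/2 + j ≠ 0 := by
    intro h0
    have := congrArg Complex.re h0
    simp at this
    have : (0:ℝ) ≤ j := Nat.cast_nonneg j
    linarith
  have hj : (j:ℂ)+1 ≠ 0 := by exact_mod_cast j.succ_ne_zero
  have hn1 : (n:ℂ)+1 ≠ 0 := by exact_mod_cast n.succ_ne_zero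
  have hn2 : (n:ℂ)+2 ≠ 0 := by exact_mod_cast (n+1).succ_ne_zero
  have hf := fac_ne n
  have hfj := fac_ne j
  have e1 : poch (-((n+2:ℕ):ℂ)) (j+1) = -(n+2) * poch (-((n+1:ℕ):ℂ)) j := by
    rw [poch_succ']; push_cast; congr 2 ; ring
  have e2 : poch (-((n+1:ℕ):ℂ)) (j+1) = poch (-((n+1:ℕ):ℂ)) j * (j - n - 1) := by
    rw [poch_succ]; push_cast; ring
  have e3 : (-(n+1)) * poch (-(n:ℂ)) (j+1) = poch (-((n+1:ℕ):ℂ)) j * (j - n - 1) * (j - n) := by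
    have h1 : poch (-((n+1:ℕ):ℂ)) (j+2) = poch (-((n+1:ℕ):ℂ)) j * (j - n - 1) * (j - n) := by
      rw [poch_succ, e2]; push_cast; ring
    rw [← h1, poch_succ' (-((n+1:ℕ):ℂ))]; push_cast; congr 2 ; ring
  have e3' : poch (-(n:ℂ)) (j+1) = -(poch (-((n+1:ℕ):ℂ)) j * (j - n - 1) * (j - n)) / (n+1) := by
    rw [← e3]; field_simp
  simp only [gco, e1, e2, e3', Nat.factorial_succ]
  rw [show n+2+(j+1) = n+1+j+1+1 by ring, show n+1+(j+1) = n+1+j+1 by ring,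
    show n+(j+1) = n+1+j by ring]
  simp only [poch_succ (μ+1/2), poch_succ (2*μ) (n+1+j), poch_succ (2*μ) (n+1+j+1)]
  push_cast
  rw [show (n:ℂ)+1+1 = n+2 by ring]
  generalize poch (-((n:ℂ)+1)) j = P
  generalize poch (2*μ) (n+1+j) = W
  generalize poch (μ+1/2) j = s at *
  obtain ⟨q, hq⟩ : ∃ q, q = μ+1/2+(j:ℂ) := ⟨_, rfl⟩
  rw [← hq] at hs' ⊢
  obtain rfl : μ = q - 1/2 - j := by rw [hq]; ring
  field_simp
  ring

lemma gco_rec0 (μ : ℂ) (n : ℕ) :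
    ((n:ℂ)+2) * gco μ (n+2) 0 = 2*(n+1+μ)*(gco μ (n+1) 0)
      - (n+2*μ) * gco μ n 0 := by
  have hn1 : (n:ℂ)+1 ≠ 0 := by exact_mod_cast n.succ_ne_zero
  have hn2 : (n:ℂ)+1+1 ≠ 0 := by exact_mod_cast (n+1).succ_ne_zero
  have hf := fac_ne n
  simp only [gco, poch_zero, Nat.factorial_succ, add_zero, poch_succ]
  push_cast
  field_simp
  ring

lemma gegen_rec (μ x : ℂ) (hμ : 0 < μ.re) (n : ℕ) :
    ((n:ℂ)+2) * gegenbauerC (n+2) μ x = 2*(n+1+μ)*x*gegenbauerC (n+1) μ x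
      - (n+2*μ) * gegenbauerC n μ x := by
  have h1 : x * gegenbauerC (n+1) μ x = gco μ (n+1) 0 + ∑ j ∈ Finset.range (n+3),
      (gco μ (n+1) (j+1) - 2 * gco μ (n+1) j) * ((1-x)/2)^(j+1) := by
    have : x * gegenbauerC (n+1) μ x = gegenbauerC (n+1) μ x
        - 2 * ((1-x)/2) * gegenbauerC (n+1) μ x := by ring
    rw [this]
    nth_rw 1 [gegen_eq μ x (n+1) (n+3+1) (by omega)]
    rw [gegen_eq μ x (n+1) (n+3) (by omega), Finset.sum_range_succ', Finset.mul_sum,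
      add_comm _ (gco μ (n+1) 0 * _), add_sub_assoc, ← Finset.sum_sub_distrib]
    congr 1
    · simp
    · apply Finset.sum_congr rfl; intros; ring
  rw [mul_assoc _ x, h1, gegen_eq μ x (n+2) (n+3+1) (by omega), gegen_eq μ x n (n+3+1) (by omega),
    Finset.sum_range_succ' _ (n+3), Finset.sum_range_succ' _ (n+3)]
  have : ∀ j, ((n:ℂ)+2) * (gco μ (n+2) (j+1) * ((1-x)/2)^(j+1)) =
      2*(n+1+μ)*((gco μ (n+1) (j+1) - 2 * gco μ (n+1) j)* ((1-x)/2)^(j+1))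
      - (n+2*μ) * (gco μ n (j+1)* ((1-x)/2)^(j+1)) := by
    intro j
    rw [← mul_assoc, gco_rec μ hμ]; ring
  rw [mul_add, Finset.mul_sum, Finset.sum_congr rfl (fun j _ => this j), Finset.sum_sub_distrib,
    ← Finset.mul_sum, ← Finset.mul_sum]
  have := gco_rec0 μ n
  simp only [pow_zero, mul_one]
  linear_combination this

lemma gegen_zero (μ x : ℂ) : gegenbauerC 0 μ x = 1 := by
  simp [gegenbauerC, poch_zero]

lemma gegen_one (μ x : ℂ) (hμ : 0 < μ.re) : gegenbauerC 1 μ x = 2*μ*x := by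
  have hs' : μ+1/2 ≠ 0 := by
    intro h0
    have := congrArg Complex.re h0
    simp at this
    linarith
  simp [gegenbauerC, poch_zero, poch, Finset.sum_range_succ]
  have : μ + 2⁻¹ ≠ 0 := by simpa using hs'
  obtain ⟨q, hq⟩ : ∃ q, q = μ+2⁻¹ := ⟨_, rfl⟩
  rw [← hq] at this ⊢
  obtain rfl : μ = q - 1/2 := by rw [hq]; ring
  field_simp
  ring_nf
  simp

/-! bound -/
noncomputable def apoch (μ : ℂ) (k : ℕ) : ℂ := poch μ k / (k.factorial : ℂ)

noncomputable def gser (μ u : ℂ) : PowerSeries ℂ := PowerSeries.mk (fun k => u^k * apoch μ k)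

lemma gser_deriv (μ u : ℂ) : (1 - PowerSeries.C u * PowerSeries.X) *
    PowerSeries.derivative ℂ (gser μ u) = PowerSeries.C (u*μ) * gser μ u := by
  have key : ∀ k : ℕ, apoch μ (k+1) * (k+1) = apoch μ k * (μ+k) := by
    intro k
    have hn1 : (k:ℂ)+1 ≠ 0 := by exact_mod_cast k.succ_ne_zero
    have hf := fac_ne k
    simp only [apoch, poch_succ, Nat.factorial_succ]
    push_cast; field_simp
  ext k
  rw [sub_mul, one_mul, map_sub, mul_assoc, PowerSeries.coeff_C_mul, PowerSeries.coeff_C_mul,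
    PowerSeries.coeff_derivative]
  rcases k with _ | k
  · have := key 0
    simp [gser] at *
    linear_combination u * this
  · rw [PowerSeries.coeff_succ_X_mul, PowerSeries.coeff_derivative]
    have := key (k+1)
    simp [gser] at *
    linear_combination u^(k+2) * this

lemma gegen_coeff (μ x u v : ℂ) (hμ : 0 < μ.re) (huv : u * v = 1) (hx : u + v = 2 * x) (n : ℕ) :
    gegenbauerC n μ x = PowerSeries.coeff n (gser μ u * gser μ v) := by
  have hF : (1 - PowerSeries.C (2*x) * PowerSeries.X + PowerSeries.X * PowerSeries.X) *
      PowerSeries.derivative ℂ (gser μ u * gser μ v) =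
      PowerSeries.C (2*x*μ) * (gser μ u * gser μ v)
        - PowerSeries.C (2*μ) * (PowerSeries.X * (gser μ u * gser μ v)) := by
    have h1 := gser_deriv μ u
    have h2 := gser_deriv μ v
    have c1 : (PowerSeries.C u : PowerSeries ℂ) * PowerSeries.C v = 1 := by
      rw [← map_mul, huv, map_one]
    have c2 : (PowerSeries.C (2*x) : PowerSeries ℂ) = PowerSeries.C u + PowerSeries.C v := by
      rw [← map_add, hx]
    have c3 : (PowerSeries.C (2*x*μ) : PowerSeries ℂ) =
        (PowerSeries.C u + PowerSeries.C v) * PowerSeries.C μ := by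
      rw [map_mul, c2]
    have c4 : (PowerSeries.C (2*μ) : PowerSeries ℂ) = 2 * PowerSeries.C μ := by
      rw [two_mul, two_mul, map_add]
    rw [Derivation.leibniz, c3, c2, c4]
    rw [map_mul] at h1 h2
    simp only [smul_eq_mul]
    generalize (PowerSeries.derivative ℂ (gser μ u)) = A' at *
    generalize (PowerSeries.derivative ℂ (gser μ v)) = B' at *
    generalize gser μ u = A at *
    generalize gser μ v = B at *
    generalize (PowerSeries.C u : PowerSeries ℂ) = U at *
    generalize (PowerSeries.C v : PowerSeries ℂ) = V at *
    generalize (PowerSeries.C μ : PowerSeries ℂ) = m at *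
    generalize (PowerSeries.X : PowerSeries ℂ) = X at *
    linear_combination (1 - V*X)*B*h1 + (1-U*X)*A*h2 - (X^2*(A*B'+B*A') + 2 * X*m*A*B)*c1
  induction n using Nat.strong_induction_on with
  | _ n ih =>
    rcases n with _ | _ | n
    · simp [gegen_zero, gser, apoch, poch_zero]
    · rw [zero_add, gegen_one μ x hμ, PowerSeries.coeff_mul]
      simp [Finset.Nat.antidiagonal_succ, gser, apoch, poch]
      linear_combination -μ * hx
    · have h := gegen_rec μ x hμ n
      rw [ih n (by omega), ih (n+1) (by omega)] at h
      have hc := congrArg (PowerSeries.coeff (n+1)) hF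
      rw [add_mul, sub_mul, one_mul, mul_assoc, mul_assoc PowerSeries.X, map_add, map_sub, map_sub, PowerSeries.coeff_C_mul,
        PowerSeries.coeff_C_mul, PowerSeries.coeff_C_mul, PowerSeries.coeff_succ_X_mul,
        PowerSeries.coeff_succ_X_mul, PowerSeries.coeff_succ_X_mul,
        PowerSeries.coeff_derivative, PowerSeries.coeff_derivative] at hc
      have hX : PowerSeries.coeff n (PowerSeries.X * PowerSeries.derivative ℂ (gser μ u * gser μ v))
        = n * PowerSeries.coeff n (gser μ u * gser μ v) := by
        rcases n with _ | n
        · simp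
        · rw [PowerSeries.coeff_succ_X_mul, PowerSeries.coeff_derivative]; push_cast; ring
      rw [hX] at hc
      have hn2 : (n:ℂ)+2 ≠ 0 := by exact_mod_cast (n+1).succ_ne_zero
      apply mul_left_cancel₀ hn2
      push_cast at *
      linear_combination h - hc

noncomputable def rap (μ : ℝ) (k : ℕ) : ℝ := (∏ i ∈ Finset.range k, (μ + i)) / k.factorial
noncomputable def rgeg (μ : ℝ) (n : ℕ) : ℝ :=
  ∑ p ∈ Finset.HasAntidiagonal.antidiagonal n, rap μ p.1 * rap μ p.2

lemma apoch_real (μ : ℝ) (k : ℕ) : apoch μ k = (rap μ k : ℂ) := by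
  simp [apoch, rap, poch]
lemma rap_nonneg (μ : ℝ) (hμ : 0 < μ) (k : ℕ) : 0 ≤ rap μ k := by
  unfold rap; positivity

lemma gegen_at_one (μ : ℝ) (hμ : 0 < μ) (n : ℕ) : gegenbauerC n μ 1 = (rgeg μ n : ℂ) := by
  rw [gegen_coeff (μ:ℂ) 1 1 1 (by simpa using hμ) (by simp) (by norm_num), PowerSeries.coeff_mul]
  simp [gser, rgeg, apoch_real]

lemma gegen_bound (μ : ℝ) (hμ : 0 < μ) (n : ℕ) (x : ℝ) (hx : x ∈ Set.Icc (-1:ℝ) 1) :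
    ‖gegenbauerC n μ x‖ ≤ rgeg μ n := by
  set θ := Real.arccos x
  have hc : Complex.cos θ = x := by
    rw [← Complex.ofReal_cos, Real.cos_arccos hx.1 hx.2]
  rw [gegen_coeff (μ:ℂ) x (Complex.exp (θ * I)) (Complex.exp (-θ * I)) (by simpa using hμ)
    (by rw [← Complex.exp_add]; simp) (by rw [← hc, Complex.two_cos]), PowerSeries.coeff_mul]
  refine (norm_sum_le _ _).trans (Finset.sum_le_sum ?_)
  intro p _
  have e2 : ‖Complex.exp (-(θ:ℂ) * I)‖ = 1 := by
    have := Complex.norm_exp_ofReal_mul_I (-θ); simpa using this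
  simp only [gser, PowerSeries.coeff_mk, norm_mul, norm_pow, Complex.norm_exp_ofReal_mul_I, e2,
    apoch_real, Complex.norm_real, Real.norm_eq_abs, abs_of_nonneg (rap_nonneg μ hμ _)]
  simp

/-! connection -/
noncomputable def Gt (μ x : ℂ) (m k : ℕ) : ℂ :=
  if 2*k ≤ m then (((m-2*k : ℕ):ℂ)+μ) / (k.factorial * poch μ (m-k+1)) * gegenbauerC (m-2*k) μ x
  else 0
noncomputable def Ut (μ x : ℂ) (m k : ℕ) : ℂ :=
  if 2*k ≤ m then (((m-2*k : ℕ):ℂ)+1) / (k.factorial * poch μ (m-k+1)) * gegenbauerC (m-2*k+1) μ x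
  else 0
noncomputable def Vt (μ x : ℂ) (m k : ℕ) : ℂ :=
  if 2*k+1 ≤ m then (((m-2*k-1 : ℕ):ℂ)+2*μ) / (k.factorial * poch μ (m-k+1)) * gegenbauerC (m-2*k-1) μ x
  else 0

lemma GUV (μ x : ℂ) (hμ : 0 < μ.re) (m k : ℕ) : 2*x*Gt μ x m k = Ut μ x m k + Vt μ x m k := by
  unfold Gt Ut Vt
  by_cases h : 2*k ≤ m
  · obtain ⟨n, rfl⟩ := Nat.exists_eq_add_of_le h
    rw [if_pos h, if_pos h]
    rcases n with _ | n
    · simp [gegen_zero, gegen_one μ x hμ]; ring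
    · rw [if_pos (by omega)]
      rw [show 2*k+(n+1)-2*k = n+1 by omega, show n+1-1 = n by omega]
      have := gegen_rec μ x hμ n
      push_cast
      linear_combination (-1 / (k.factorial * poch μ (2*k+(n+1)-k+1))) * this
  · rw [if_neg h, if_neg h, if_neg (by omega)]; simp

lemma GU0 (μ x : ℂ) (hμ : 0 < μ.re) (m : ℕ) : ((m:ℂ)+1) * Gt μ x (m+1) 0 = Ut μ x m 0 := by
  have h1 := poch_ne_zero μ hμ (m+1)
  have h2 := poch_ne_zero μ hμ (m+1+1)
  rw [poch_succ] at h2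
  have h3 := right_ne_zero_of_mul h2
  simp [Gt, Ut]
  rw [poch_succ μ (m+1)]
  push_cast at *
  field_simp
  ring_nf

lemma GUVk (μ x : ℂ) (hμ : 0 < μ.re) (m k : ℕ) :
    ((m:ℂ)+1) * Gt μ x (m+1) (k+1) = Ut μ x m (k+1) + Vt μ x m k := by
  unfold Gt Ut Vt
  by_cases h : 2*k+1 ≤ m
  · obtain ⟨n, rfl⟩ := Nat.exists_eq_add_of_le h
    rw [if_pos (by omega), if_pos h]
    have hk : (k:ℂ)+1 ≠ 0 := by exact_mod_cast k.succ_ne_zero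
    have hf := fac_ne k
    rw [show 2*k+1+n+1-(k+1)+1 = k+n+1+1 by omega, show 2*k+1+n-k+1 = k+n+1+1 by omega,
      show 2*k+1+n+1-2*(k+1) = n by omega, show 2*k+1+n-2*k-1 = n by omega]
    have h1 := poch_ne_zero μ hμ (k+n+1)
    have h2 := poch_ne_zero μ hμ (k+n+1+1)
    rw [poch_succ] at h2
    have h3 := right_ne_zero_of_mul h2
    rw [poch_succ μ (k+n+1), Nat.factorial_succ]
    rcases n with _ | n
    · rw [if_neg (by omega)]
      push_cast at *; field_simp; ring
    · rw [if_pos (by omega), show 2*k+1+(n+1)-(k+1)+1 = k+(n+1)+1 by omega,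
        show 2*k+1+(n+1)-2*(k+1) = n by omega]
      push_cast at *; field_simp; ring
  · rw [if_neg (by omega), if_neg (by omega), if_neg h]; simp

lemma Gt_sum (μ x : ℂ) (hμ : 0 < μ.re) (m : ℕ) : ∀ M, m < M →
    ∑ k ∈ Finset.range M, Gt μ x m k = (2*x)^m / m.factorial := by
  induction m with
  | zero =>
    intro M hM
    obtain ⟨M, rfl⟩ : ∃ M', M = M'+1 := ⟨M-1, by omega⟩
    rw [Finset.sum_range_succ', Finset.sum_eq_zero]
    · have : μ ≠ 0 := by rintro rfl; simp at hμ
      simp [Gt, poch, gegen_zero, this]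
    · intro k _; simp [Gt]
  | succ m ih =>
    intro M hM
    obtain ⟨M, rfl⟩ : ∃ M', M = M'+1 := ⟨M-1, by omega⟩
    have hn1 : (m:ℂ)+1 ≠ 0 := by exact_mod_cast m.succ_ne_zero
    have hf := fac_ne m
    have key : ((m:ℂ)+1) * ∑ k ∈ Finset.range (M+1), Gt μ x (m+1) k
        = 2*x*∑ k ∈ Finset.range (M+1), Gt μ x m k := by
      rw [Finset.mul_sum (Finset.range (M+1)) _ (2*x), Finset.sum_congr rfl (fun k _ => GUV μ x hμ m k), Finset.sum_add_distrib,
        Finset.sum_range_succ', Finset.sum_range_succ', Finset.sum_range_succ (Vt μ x m), mul_add,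
        Finset.mul_sum, Finset.sum_congr rfl (fun k _ => GUVk μ x hμ m k), GU0 μ x hμ,
        Finset.sum_add_distrib]
      have : Vt μ x m M = 0 := by unfold Vt; rw [if_neg (by omega)]
      rw [this]; ring
    rw [ih _ (by omega)] at key
    apply mul_left_cancel₀ hn1
    rw [key, Nat.factorial_succ]; push_cast; field_simp; ring

lemma choose_poch (a : ℂ) (n : ℕ) : Ring.choose (a + n - 1) n = poch a n / (n.factorial : ℂ) := by
  rw [← Ring.multichoose_eq]
  have h := Ring.factorial_nsmul_multichoose_eq_ascPochhammer a n
  rw [Polynomial.ascPochhammer_smeval_eq_eval] at h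
  have h2 : (ascPochhammer ℂ n).eval a = poch a n := by
    induction n with
    | zero => simp [poch_zero]
    | succ n ih =>
      rw [ascPochhammer_succ_eval, poch_succ, ih]
      have h := Ring.factorial_nsmul_multichoose_eq_ascPochhammer a n
      rwa [Polynomial.ascPochhammer_smeval_eq_eval] at h
  rw [h2] at h
  rw [← h, eq_div_iff (fac_ne n), nsmul_eq_mul, mul_comm]

lemma binom_hasSum (a w : ℂ) (hw : ‖w‖ < 1) :
    HasSum (fun m : ℕ => poch a m / (m.factorial : ℂ) * w^m) (1 / (1-w)^a) := by
  have h := (Complex.one_div_one_sub_cpow_hasFPowerSeriesOnBall_zero a).hasSum (y := w)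
    (by
      rw [← ENNReal.ofReal_one, Metric.eball_ofReal]
      simpa using hw)
  simp only [FormalMultilinearSeries.ofScalars_apply_eq, zero_add, smul_eq_mul, choose_poch] at h
  exact h

noncomputable def hh (ν μ x t : ℂ) (p : ℕ × ℕ) : ℂ := poch ν p.1 * (t/2)^p.1 * Gt μ x p.1 p.2

lemma Gt_zero (μ x : ℂ) (m k : ℕ) (h : k ∉ Finset.range (m+1)) : Gt μ x m k = 0 := by
  simp at h
  unfold Gt; rw [if_neg (by omega)]

lemma Gt_bound (μ : ℝ) (hμ : 0 < μ) (x : ℝ) (hx : x ∈ Set.Icc (-1:ℝ) 1) (m k : ℕ) :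
    ‖Gt μ x m k‖ ≤ (Gt μ 1 m k).re := by
  unfold Gt
  split_ifs with h
  · have e : (((m-2*k : ℕ):ℂ)+μ) / (k.factorial * poch μ (m-k+1)) =
      ((((m-2*k : ℕ):ℝ)+μ) / (k.factorial * ∏ i ∈ Finset.range (m-k+1), (μ + i)) : ℝ) := by
      push_cast [poch]; rfl
    rw [e, gegen_at_one μ hμ, ← Complex.ofReal_mul, Complex.ofReal_re, norm_mul,
      Complex.norm_real, Real.norm_of_nonneg (by positivity)]
    gcongr
    exact gegen_bound μ hμ _ x hx
  · simp

lemma hh_summable (ν : ℂ) (μ : ℝ) (hμ : 0 < μ) (x : ℝ) (hx : x ∈ Set.Icc (-1:ℝ) 1) (t : ℝ)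
    (ht0 : 0 < t) (ht1 : t < 1) : Summable (hh ν μ x t) := by
  apply Summable.of_norm
  rw [summable_prod_of_nonneg (fun _ => norm_nonneg _)]
  constructor
  · intro m
    apply summable_of_ne_finset_zero (s := Finset.range (m+1))
    intro k hk
    simp [hh, Gt_zero _ _ m k hk]
  · have hs := (binom_hasSum ν t (by simpa [abs_of_pos ht0] using ht1)).summable.norm
    refine Summable.of_nonneg_of_le (fun m => tsum_nonneg fun _ => norm_nonneg _) ?_ hs
    intro m
    rw [tsum_eq_sum (s := Finset.range (m+1))
      (by intro k hk; simp [hh, Gt_zero _ _ m k hk])]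
    have h1 : ∑ k ∈ Finset.range (m+1), ‖Gt μ x m k‖ ≤ 2^m / m.factorial := by
      calc _ ≤ ∑ k ∈ Finset.range (m+1), (Gt μ 1 m k).re :=
            Finset.sum_le_sum fun k _ => Gt_bound μ hμ x hx m k
        _ = (∑ k ∈ Finset.range (m+1), Gt μ 1 m k).re := by simp
        _ = _ := by
          rw [Gt_sum μ 1 (by simpa using hμ) m _ (by omega)]
          rw [show ((2:ℂ)*1)^m / (m.factorial : ℂ) = ((2^m/m.factorial : ℝ) : ℂ) by push_cast; ring]
          rw [Complex.ofReal_re]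
    simp only [hh, norm_mul]
    rw [← Finset.mul_sum]
    refine (mul_le_mul_of_nonneg_left h1 (by positivity)).trans (le_of_eq ?_)
    simp
    rw [div_pow]
    field_simp

lemma hh_tsum (ν : ℂ) (μ : ℝ) (hμ : 0 < μ) (x : ℝ) (hx : x ∈ Set.Icc (-1:ℝ) 1) (t : ℝ)
    (ht0 : 0 < t) (ht1 : t < 1) :
    ∑' p, hh ν μ x t p = 1 / (1 - t * x : ℂ)^ν := by
  have hs := hh_summable ν μ hμ x hx t ht0 ht1
  rw [hs.tsum_prod]
  have hw : ‖(t * x : ℂ)‖ < 1 := by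
    have : |x| ≤ 1 := abs_le.mpr hx
    rw [norm_mul]; simp only [Complex.norm_real, Real.norm_eq_abs, abs_of_pos ht0]
    nlinarith [abs_nonneg x]
  rw [← (binom_hasSum ν (t*x) hw).tsum_eq]
  congr 1
  ext m
  rw [tsum_eq_sum (s := Finset.range (m+1))
      (by intro k hk; simp [hh, Gt_zero _ _ m k hk])]
  simp only [hh]
  rw [← Finset.mul_sum, Gt_sum μ x (by simpa using hμ) m _ (by omega)]
  have := fac_ne m
  rw [mul_pow, mul_pow, div_pow]
  field_simp

lemma expansion (ν : ℂ) (μ : ℝ) (hμ : 0 < μ) (x : ℝ) (hx : x ∈ Set.Icc (-1:ℝ) 1) (t : ℝ)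
    (ht0 : 0 < t) (ht1 : t < 1) :
    1 / (1 - t * x : ℂ)^ν = ∑' n : ℕ, poch ν n * (t/2:ℂ)^n * ((n+μ)/poch μ (n+1))
      * hyp2F1 ((n+ν+1)/2) ((n+ν)/2) (n+μ+1) (t^2) * gegenbauerC n μ x := by
  have hs := hh_summable ν μ hμ x hx t ht0 ht1
  let e : ℕ × ℕ → ℕ × ℕ := fun p => (p.1 + 2*p.2, p.2)
  have he : Function.Injective e := by
    rintro ⟨a,b⟩ ⟨c,d⟩ h
    simp [e] at h
    ext <;> simp <;> omega
  have hsupp : Function.support (hh ν μ x t) ⊆ Set.range e := by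
    rintro ⟨m,k⟩ h
    by_cases h2 : 2*k ≤ m
    · exact ⟨(m-2*k, k), by simp [e]; omega⟩
    · exfalso; apply h; simp only [hh, Gt]; rw [if_neg h2, mul_zero]
  rw [← hh_tsum ν μ hμ x hx t ht0 ht1, ← he.tsum_eq hsupp]
  have hs' : Summable (fun p => hh ν μ x t (e p)) := hs.comp_injective he
  rw [hs'.tsum_prod]
  congr 1
  ext n
  rw [hyp2F1, mul_assoc, ← tsum_mul_right, ← tsum_mul_left]
  congr 1
  ext k
  have hμ' : 0 < (μ:ℂ).re := by simpa using hμ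
  have h1 := poch_ne_zero μ hμ' (n+1)
  have h2 := poch_ne_zero (n+μ+1) (by simp; positivity) k
  have hf := fac_ne k
  simp only [hh, e, Gt]
  rw [if_pos (by omega), poch_double, show n+2*k-2*k = n by omega, show n+2*k-k+1 = n+1+k by omega,
    poch_add ν, poch_add (μ:ℂ)]
  rw [show (μ:ℂ) + ((n+1:ℕ):ℂ) = n+μ+1 by push_cast; ring, show ν + (n:ℂ) = n+ν by ring]
  rw [pow_add, pow_mul (t/2 : ℂ), div_pow (t:ℂ) 2 2, div_pow _ _ k, show (2:ℂ)^2 = 4 by norm_num]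
  field_simp

lemma Gamma_poch (a : ℂ) (h : ∀ m : ℕ, a ≠ -(m:ℂ)) (n : ℕ) :
    Complex.Gamma (a+n) = poch a n * Complex.Gamma a := by
  induction n with
  | zero => simp [poch_zero]
  | succ n ih =>
    push_cast
    rw [← add_assoc, Complex.Gamma_add_one, ih, poch_succ]
    · ring
    · intro h0; exact h n (by linear_combination h0)

lemma cpow_mul3 (a b c : ℝ) (ha : 0 ≤ a) (hb : 0 ≤ b) (hc : 0 ≤ c) (r : ℂ) :
    ((a:ℂ)*((b:ℂ)*(c:ℂ)))^r = (a:ℂ)^r*((b:ℂ)^r*(c:ℂ)^r) := by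
  rw [← Complex.ofReal_mul b c, Complex.mul_cpow_ofReal_nonneg ha (by positivity),
    Complex.ofReal_mul, Complex.mul_cpow_ofReal_nonneg hb hc]

/-- the `d`-dimensional variant obtained by `ν = d/2-1` and `ν ↦ -ν/2`,
generalizing (9.9.2) of Andrews, Askey & Roy. -/
theorem gegenbauer_expansion_dimension_d
    (d : ℕ) (hd : 3 ≤ d)
    (ν : ℂ) (hν : ∀ m : ℕ, ν ≠ -(m : ℂ)) (hν2 : ∀ m : ℕ, -ν / 2 ≠ -(m : ℂ))
    (x : ℝ) (hx : x ∈ Set.Icc (-1 : ℝ) 1)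
    (ρ : ℝ) (hρ0 : 0 < ρ) (hρ1 : ρ < 1) :
    (ρ : ℂ) ^ (((d : ℂ) - 1) / 2) * (1 - (ρ : ℂ) ^ 2) ^ (ν - ((d : ℂ) - 1) / 2) /
        (1 + (ρ : ℂ) ^ 2 - 2 * (ρ : ℂ) * (x : ℂ)) ^ ν =
      Complex.exp (-(Real.pi * I * (ν - ((d : ℂ) - 1) / 2))) * Complex.Gamma (((d : ℂ) - 2) / 2) /
          (2 * (Real.sqrt Real.pi : ℂ) * Complex.Gamma ν) *
        ∑' n : ℕ,
          (2 * (n : ℂ) + (d : ℂ) - 2) *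
            legendreQ ((n : ℂ) + ((d : ℂ) - 3) / 2) (ν - ((d : ℂ) - 1) / 2)
              ((1 + (ρ : ℂ) ^ 2) / (2 * (ρ : ℂ))) *
            gegenbauerC n ((d : ℂ) / 2 - 1) (x : ℂ) := by
  set μ : ℝ := (d:ℝ)/2 - 1 with hμd
  have hd' : (3:ℝ) ≤ d := by exact_mod_cast hd
  have hμ : 0 < μ := by rw [hμd]; linarith
  have hdμ : (d:ℂ) = 2*μ+2 := by rw [hμd]; push_cast; ring
  set z : ℝ := (1+ρ^2)/(2*ρ) with hz
  have hz0 : 0 < z := by rw [hz]; positivity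
  have hz1 : 1 < z := by
    rw [hz, lt_div_iff₀ (by positivity)]; nlinarith [sq_nonneg (1-ρ), sub_pos.mpr hρ1]
  have hρz : 2*ρ*z = 1+ρ^2 := by rw [hz]; field_simp
  set S : ℝ := (1-ρ^2)/(2*ρ) with hS
  have hS0 : 0 < S := by
    rw [hS]; apply div_pos _ (by positivity); nlinarith
  have hρS : 2*ρ*S = 1-ρ^2 := by rw [hS]; field_simp
  have hzS : z^2-1 = S*S := by rw [hz, hS]; field_simp; ring
  set t : ℝ := 1/z with ht
  have ht0 : 0 < t := by rw [ht]; positivity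
  have ht1 : t < 1 := by rw [ht, div_lt_one hz0]; exact hz1
  have hexp := expansion ν μ hμ x hx t ht0 ht1
  have htx : 0 < 1 - t*x := by nlinarith [hx.1, hx.2]
  have hq : (1 + (ρ:ℂ)^2 - 2*ρ*x) = ((2:ℝ):ℂ)*((ρ:ℝ)*((z:ℝ)*((1-t*x:ℝ):ℂ))) := by
    have : (1 + ρ^2 - 2*ρ*x) = 2*(ρ*(z*(1-t*x))) := by
      have : z*t = 1 := by rw [ht]; field_simp
      linear_combination -hρz + 2*ρ*x*this
    exact_mod_cast this
  have hr : (1 - (ρ:ℂ)^2) = ((2:ℝ):ℂ)*((ρ:ℝ)*(S:ℝ)) := by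
    have : 1-ρ^2 = 2*(ρ*S) := by linear_combination -hρS
    exact_mod_cast this
  have hzc : (1 + (ρ:ℂ)^2)/(2*ρ) = (z:ℂ) := by rw [hz]; push_cast; rfl
  have hzSc : (z:ℂ)^2-1 = (S:ℂ)*(S:ℂ) := by exact_mod_cast hzS
  have cz : (z:ℂ) ≠ 0 := by exact_mod_cast hz0.ne'
  have cρ : (ρ:ℂ) ≠ 0 := by exact_mod_cast hρ0.ne'
  have cS : (S:ℂ) ≠ 0 := by exact_mod_cast hS0.ne'
  have c2 : (2:ℂ) ≠ 0 := two_ne_zero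
  have hcpw : ∀ w : ℂ, w ≠ 0 → ∀ s : ℂ, w^s ≠ 0 := by
    intro w hw s; simp [Complex.cpow_eq_zero_iff, hw]
  set β : ℂ := ν - ((d:ℂ)-1)/2 with hβ
  have hSβ : ((z:ℂ)^2-1)^(β/2) = (S:ℂ)^β := by
    rw [hzSc, Complex.mul_cpow_ofReal_nonneg hS0.le hS0.le, ← Complex.cpow_add _ _ cS]
    congr 1; ring
  have hνΓ : Complex.Gamma ν ≠ 0 := Complex.Gamma_ne_zero hν
  have hμn : ∀ m : ℕ, (μ:ℂ) ≠ -(m:ℂ) := by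
    intro m h0
    have := congrArg Complex.re h0
    simp at this
    have : (0:ℝ) ≤ m := Nat.cast_nonneg m
    linarith
  have hμΓ : Complex.Gamma (μ:ℂ) ≠ 0 := Complex.Gamma_ne_zero hμn
  have hπ : ((Real.sqrt Real.pi : ℝ):ℂ) ≠ 0 := by
    exact_mod_cast (Real.sqrt_pos.mpr Real.pi_pos).ne'
  have hK : (ρ : ℂ) ^ (((d : ℂ) - 1) / 2) * (1 - (ρ : ℂ) ^ 2) ^ β /
        (1 + (ρ : ℂ) ^ 2 - 2 * (ρ : ℂ) * (x : ℂ)) ^ ν =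
      (S:ℂ)^β / (2^(((d : ℂ) - 1) / 2) * (z:ℂ)^ν) * (1 / (1 - t * x : ℂ)^ν) := by
    rw [hq, hr, cpow_mul3 2 ρ S (by norm_num) hρ0.le hS0.le, ← Complex.ofReal_mul z,
      cpow_mul3 2 ρ (z*(1-t*x)) (by norm_num) hρ0.le (by positivity), Complex.ofReal_mul z,
      Complex.mul_cpow_ofReal_nonneg hz0.le htx.le]
    have e2 : ((2:ℝ):ℂ)^β = 2^ν / 2^(((d : ℂ) - 1) / 2) := by
      rw [hβ, Complex.ofReal_ofNat, Complex.cpow_sub _ _ c2]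
    have eρ : (ρ:ℂ)^β = ρ^ν / ρ^(((d : ℂ) - 1) / 2) := by
      rw [hβ, Complex.cpow_sub _ _ cρ]
    rw [e2, eρ, Complex.ofReal_ofNat]
    have a1 := hcpw _ c2 ν
    have a2 := hcpw _ c2 (((d : ℂ) - 1) / 2)
    have a3 := hcpw _ cρ ν
    have a4 := hcpw _ cρ (((d : ℂ) - 1) / 2)
    have a5 := hcpw _ cz ν
    have a6 := hcpw ((1-t*x:ℝ):ℂ) (by exact_mod_cast htx.ne') ν
    push_cast at *
    field_simp
  rw [hK, hexp, ← tsum_mul_left, ← tsum_mul_left]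
  congr 1
  ext n
  rw [hzc, legendreQ]
  have i1 : (n:ℂ) + ((d:ℂ)-3)/2 + β + 2 = n+ν+1 := by rw [hβ]; ring
  have i2 : (n:ℂ) + ((d:ℂ)-3)/2 + β + 1 = n+ν := by rw [hβ]; ring
  have i3 : (n:ℂ) + ((d:ℂ)-3)/2 + 3/2 = n+μ+1 := by rw [hdμ]; ring
  have i4 : (n:ℂ) + ((d:ℂ)-3)/2 + 1 = n + ((d:ℂ)-1)/2 := by ring
  rw [i1, i2, i3, i4, hSβ]
  have g1 : Complex.Gamma (n+ν) = poch ν n * Complex.Gamma ν := by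
    rw [add_comm, Gamma_poch ν hν]
  have g2 : Complex.Gamma (n+μ+1) = poch μ (n+1) * Complex.Gamma μ := by
    rw [← Gamma_poch μ hμn]; congr 1; push_cast; ring
  have g3 : ((d:ℂ)-2)/2 = μ := by rw [hdμ]; ring
  have g4 : (d:ℂ)/2-1 = μ := by rw [hdμ]; ring
  have g5 : (2*(n:ℂ)+d-2) = 2*(n+μ) := by rw [hdμ]; ring
  have g6 : (1 / (z:ℂ)^2) = (t:ℂ)^2 := by rw [ht]; push_cast; ring
  rw [g1, g2, g3, g4, g5, g6, Complex.cpow_add _ _ cz, Complex.cpow_add _ _ c2,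
    Complex.cpow_natCast, Complex.cpow_natCast, Complex.exp_neg]
  have hp := poch_ne_zero μ (by simpa using hμ) (n+1)
  have a2 := hcpw _ c2 (((d : ℂ) - 1) / 2)
  have a5 := hcpw _ cz ν
  have g7 : (t/2:ℂ)^n = 1/(2^n*(z:ℂ)^n) := by
    rw [ht]; push_cast; rw [← mul_pow, one_div, div_eq_mul_inv, ← mul_inv, inv_pow, one_div, mul_comm]
  rw [g7]
  have he := Complex.exp_ne_zero (Real.pi * I * β)
  generalize hyp2F1 _ _ _ _ = F
  generalize gegenbauerC _ _ _ = G
  field_simp
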